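/- Assume f satisfies (f1) and (f2), let α* ∈ G_k, and let α₁ < α₂ lie in (α*−δ₁, α*+δ₁), with δ₁ as in the δ₁-lemma. For j = 1,2 let r_j(s) := r(s,α_j) be the inverse of u_j := u(·,α_j) on a decreasing branch whose values cover [−β,β], and W_j(s) := r_j(s)·√((u_j'(r_j(s)))² + 2F(s)). If there exists U ∈ [−β,β] such that r₁(U) ≥ r₂(U) and W₁(U) < W₂(U), then r₁(s) > r₂(s) and W₁(s) < W₂(s) for all s ∈ [−β, U). -/

import Mathlib

open Set Filter MeasureTheory

namespace Paper

noncomputable section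

/-- `F s = ∫₀ˢ f t dt`. -/
def Fint (f : ℝ → ℝ) (s : ℝ) : ℝ := ∫ t in (0:ℝ)..s, f t

/-- Hypothesis (f1): `f` is odd, `f 0 = 0`, there are `β > b > 0` with `f > 0` on `(b,∞)`,
`f ≤ 0`, `f ≢ 0` on `[0,b]`, and `F β = 0`. -/
def Hf1 (f : ℝ → ℝ) (b β : ℝ) : Prop :=
  (∀ s, f (-s) = -f s) ∧ f 0 = 0 ∧ 0 < b ∧ b < β ∧
    (∀ s, b < s → 0 < f s) ∧ (∀ s ∈ Icc (0:ℝ) b, f s ≤ 0) ∧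
    (∃ s ∈ Icc (0:ℝ) b, f s ≠ 0) ∧ Fint f β = 0

/-- Hypothesis (f2): `f` continuous on `[0,∞)`, C¹ on `(0,∞)`, `f' ∈ L¹(0,1)`. -/
def Hf2 (f : ℝ → ℝ) : Prop :=
  ContinuousOn f (Ici 0) ∧ (∀ s : ℝ, 0 < s → DifferentiableAt ℝ f s) ∧
    ContinuousOn (deriv f) (Ioi 0) ∧ IntegrableOn (deriv f) (Ioo 0 1)

/-- Hypothesis (f3): `f s ≥ f' s * (s - β)` for `s ≥ β`. -/
def Hf3 (f : ℝ → ℝ) (β : ℝ) : Prop := ∀ s, β ≤ s → deriv f s * (s - β) ≤ f s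

/-- Hypothesis (f4): `(F/f)' s ≥ (n-2)/(2n)` for `s > β`. -/
def Hf4 (n : ℕ) (f : ℝ → ℝ) (β : ℝ) : Prop :=
  ∀ s, β < s → ((n : ℝ) - 2) / (2 * (n : ℝ)) ≤ deriv (fun t => Fint f t / f t) s

/-- Hypothesis (f4'): `(F/f)' s ≥ (n-2)/2` for `s > β`. -/
def Hf4' (n : ℕ) (f : ℝ → ℝ) (β : ℝ) : Prop :=
  ∀ s, β < s → ((n : ℝ) - 2) / 2 ≤ deriv (fun t => Fint f t / f t) s

/-- Hypothesis (f5): `s ↦ s f' s / f s` is nonincreasing on `[β,∞)`. -/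
def Hf5 (f : ℝ → ℝ) (β : ℝ) : Prop := AntitoneOn (fun s => s * deriv f s / f s) (Ici β)

/-- Hypothesis (f6): `β f' β / f β ≤ n/(n-2)`. -/
def Hf6 (n : ℕ) (f : ℝ → ℝ) (β : ℝ) : Prop := β * deriv f β / f β ≤ (n : ℝ) / ((n : ℝ) - 2)

/-- Hypothesis (f1'): `f 0 = 0` and `s f s > 0` for `s > 0`. -/
def Hf1' (f : ℝ → ℝ) : Prop := f 0 = 0 ∧ ∀ s : ℝ, 0 < s → 0 < s * f s

/-- Hypothesis (f3'): `f s ≥ s f' s` for `s > 0`, with strict inequality at points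
arbitrarily close to `0`. -/
def Hf3' (f : ℝ → ℝ) : Prop :=
  (∀ s : ℝ, 0 < s → s * deriv f s ≤ f s) ∧
    ∀ ε : ℝ, 0 < ε → ∃ s ∈ Ioo (0:ℝ) ε, s * deriv f s < f s

/-- `v` is a C² solution of (E) on `(0,∞)`, continuous on `[0,∞)`,
with `v 0 = α` and `v' 0 = 0`. -/
def IVPsol (n : ℕ) (f : ℝ → ℝ) (α : ℝ) (v : ℝ → ℝ) : Prop :=
  v 0 = α ∧ deriv v 0 = 0 ∧ ContinuousOn v (Ici 0) ∧
    (∀ r : ℝ, 0 < r → DifferentiableAt ℝ v r ∧ DifferentiableAt ℝ (deriv v) r) ∧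
    (∀ r : ℝ, 0 < r → deriv (deriv v) r + ((n : ℝ) - 1) / r * deriv v r + f (v r) = 0)

/-- The family `α ↦ u α` of solutions of the IVP, with `u α r` and `u' α r`
continuous in `(α, r)`. -/
def Family (n : ℕ) (f : ℝ → ℝ) (u : ℝ → ℝ → ℝ) : Prop :=
  (∀ α : ℝ, 0 < α → IVPsol n f α (u α)) ∧
    ContinuousOn (fun p : ℝ × ℝ => u p.1 p.2) (Ioi 0 ×ˢ Ici 0) ∧
    ContinuousOn (fun p : ℝ × ℝ => deriv (u p.1) p.2) (Ioi 0 ×ˢ Ici 0)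

/-- The set whose supremum is `Z_k α`, given `T = T_{k-1} α`. -/
def ZsetAux (u : ℝ → ℝ → ℝ) (k : ℕ) (T α : ℝ) : Set ℝ :=
  {r | T < r ∧ ∀ s ∈ Ioo T r, (-1 : ℝ) ^ k * u α s < 0 ∧ 0 < (-1 : ℝ) ^ k * deriv (u α) s}

/-- The pair `(Z_k, T_k)`, with `T₀ = 0`;
`Z_k α = sup {r > T_{k-1} α | (-1)^k u < 0, (-1)^k u' > 0 on (T_{k-1} α, r)}` and
`T_k α = inf {r > Z_k α | u'(r, α) = 0}`. -/
def ZT (u : ℝ → ℝ → ℝ) : ℕ → (ℝ → ℝ) × (ℝ → ℝ)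
  | 0 => (fun _ => 0, fun _ => 0)
  | k + 1 =>
    let Z : ℝ → ℝ := fun α => sSup (ZsetAux u (k + 1) ((ZT u k).2 α) α)
    (Z, fun α => sInf {r | Z α < r ∧ deriv (u α) r = 0})

/-- `Z_k α` (as a real number; the genuine value when the defining set is bounded above). -/
def Zk (u : ℝ → ℝ → ℝ) (k : ℕ) (α : ℝ) : ℝ := (ZT u k).1 α

/-- `T_k α`, with `T₀ = 0`. -/
def Tk (u : ℝ → ℝ → ℝ) (k : ℕ) (α : ℝ) : ℝ := (ZT u k).2 α

/-- The defining set of `Z_k α`; `Z_k α = ∞` iff this set is unbounded above. -/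
def ZsetK (u : ℝ → ℝ → ℝ) (k : ℕ) (α : ℝ) : Set ℝ := ZsetAux u k (Tk u (k - 1) α) α

open Classical in
/-- The value of `u (·, α)` at `Z_k α`, as a limit `r → ∞` when `Z_k α = ∞`. -/
def uAtZ (u : ℝ → ℝ → ℝ) (k : ℕ) (α : ℝ) : ℝ :=
  if BddAbove (ZsetK u k α) then u α (Zk u k α) else limUnder atTop (u α)

open Classical in
/-- The value of `u' (·, α)` at `Z_k α`, as a limit `r → ∞` when `Z_k α = ∞`. -/
def duAtZ (u : ℝ → ℝ → ℝ) (k : ℕ) (α : ℝ) : ℝ :=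
  if BddAbove (ZsetK u k α) then deriv (u α) (Zk u k α) else limUnder atTop (deriv (u α))

open Classical in
/-- `Z_k α` as an extended real number. -/
def ZkE (u : ℝ → ℝ → ℝ) (k : ℕ) (α : ℝ) : WithTop ℝ :=
  if BddAbove (ZsetK u k α) then (Zk u k α : WithTop ℝ) else ⊤

/-- Membership in `F̃_k` (for `α ∈ N_{k-1}`): `(-1)^k u' (r, α) < 0` for all `r > Z_{k-1} α`. -/
def Ftil (u : ℝ → ℝ → ℝ) (k : ℕ) (α : ℝ) : Prop :=
  ∀ r, Zk u (k - 1) α < r → (-1 : ℝ) ^ k * deriv (u α) r < 0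

/-- The sets `N_k` (with `N₀ := (0,∞)`). -/
def Nk (u : ℝ → ℝ → ℝ) : ℕ → Set ℝ
  | 0 => Ioi 0
  | 1 => {α | 0 < α ∧ uAtZ u 1 α = 0 ∧ duAtZ u 1 α < 0}
  | k + 2 => {α | α ∈ Nk u (k + 1) ∧ ¬Ftil u (k + 2) α ∧ uAtZ u (k + 2) α = 0 ∧
      0 < (-1 : ℝ) ^ (k + 2) * duAtZ u (k + 2) α}

/-- The sets `G_k`. -/
def Gk (u : ℝ → ℝ → ℝ) : ℕ → Set ℝ
  | 0 => ∅
  | 1 => {α | 0 < α ∧ uAtZ u 1 α = 0 ∧ duAtZ u 1 α = 0}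
  | k + 2 => {α | α ∈ Nk u (k + 1) ∧ ¬Ftil u (k + 2) α ∧ uAtZ u (k + 2) α = 0 ∧
      duAtZ u (k + 2) α = 0}

/-- The set `F̃_k` (for `k ≥ 2`). -/
def FtilSet (u : ℝ → ℝ → ℝ) (k : ℕ) : Set ℝ := {α | α ∈ Nk u (k - 1) ∧ Ftil u k α}

/-- The set `F_k` (for `k ≥ 2`). -/
def Fk (u : ℝ → ℝ → ℝ) (k : ℕ) : Set ℝ :=
  {α | α ∈ Nk u (k - 1) ∧ ¬Ftil u k α ∧ (-1 : ℝ) ^ k * uAtZ u k α < 0}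

/-- The sets `P_k`. -/
def Pk (u : ℝ → ℝ → ℝ) : ℕ → Set ℝ
  | 0 => ∅
  | 1 => {α | 0 < α ∧ 0 < uAtZ u 1 α}
  | k + 2 => FtilSet u (k + 2) ∪ Fk u (k + 2)

/-- The set of extremal points (zeros of `u' (·, α)`) in `[0, A]`. -/
def ExtSet (u : ℝ → ℝ → ℝ) (α A : ℝ) : Set ℝ := {r | r ∈ Icc 0 A ∧ deriv (u α) r = 0}

/-- The conclusion of the δ₁-lemma (Lemma 4.1): every solution with initial value in
`(α*-δ₁, α*+δ₁)` has exactly `k` extremal points in `[0, T_{k-1}(α*) + a]`, with minimum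
values `< -β` and maximum values `> β`; moreover any two such solutions intersect between
any two of their consecutive extremal points, and in `(T_{k-1}(α*), Z_k(α*))`. -/
def DeltaOneLemma (f : ℝ → ℝ) (β : ℝ) (u : ℝ → ℝ → ℝ) (k : ℕ) (αs a δ₁ : ℝ) : Prop :=
  0 < a ∧ 0 < δ₁ ∧
    (∀ α ∈ Ioo (αs - δ₁) (αs + δ₁),
      (ExtSet u α (Tk u (k - 1) αs + a)).Finite ∧
        (ExtSet u α (Tk u (k - 1) αs + a)).ncard = k ∧
        ∀ r ∈ ExtSet u α (Tk u (k - 1) αs + a),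
          (IsLocalMin (u α) r → u α r < -β) ∧ (IsLocalMax (u α) r → β < u α r)) ∧
    ∀ α₁ ∈ Ioo (αs - δ₁) (αs + δ₁), ∀ α₂ ∈ Ioo (αs - δ₁) (αs + δ₁), α₁ < α₂ →
      (∀ i : ℕ, 1 ≤ i → i ≤ k - 1 →
        ∃ t, max (Tk u (i - 1) α₁) (Tk u (i - 1) α₂) < t ∧
          t < min (Tk u i α₁) (Tk u i α₂) ∧ u α₁ t = u α₂ t) ∧
      ∃ t, Tk u (k - 1) αs < t ∧ (BddAbove (ZsetK u k αs) → t < Zk u k αs) ∧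
        u α₁ t = u α₂ t

/-- `ρ` is the inverse of the monotone branch of `v` on `[t₁, t₂]`, whose set of values
is `[m, M]`. -/
def InvBranch (v ρ : ℝ → ℝ) (t₁ t₂ m M : ℝ) : Prop :=
  (∀ s ∈ Icc m M, ρ s ∈ Icc t₁ t₂ ∧ v (ρ s) = s) ∧
    ∀ s ∈ Ioo m M, HasDerivAt ρ (1 / deriv v (ρ s)) s

/-- `ρ` inverts a decreasing branch of `v` over the value interval `[m, M]`, along which
`(v')² + 2F > 0`. -/
def DecBranchInv (f : ℝ → ℝ) (v ρ : ℝ → ℝ) (m M : ℝ) : Prop :=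
  ∀ s ∈ Icc m M, 0 ≤ ρ s ∧ v (ρ s) = s ∧ deriv v (ρ s) < 0 ∧
    HasDerivAt ρ (1 / deriv v (ρ s)) s ∧ 0 < (deriv v (ρ s)) ^ 2 + 2 * Fint f s

/-- The functional `Q(s) = -4 (F/f)(s) r/r' - r²/(r')² - 2 r² F(s) + H(s)` computed along
the branch inverse `ρ`. -/
def Qfun (f H ρ : ℝ → ℝ) (s : ℝ) : ℝ :=
  -4 * (Fint f s / f s) * (ρ s / deriv ρ s) - (ρ s) ^ 2 / (deriv ρ s) ^ 2 -
    2 * (ρ s) ^ 2 * Fint f s + H s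

/-- The functional `P(s) = -2n (F/f)(s) r^{n-1}/r' - r^n/(r')² - 2 r^n F(s)`. -/
def Pfun (n : ℕ) (f : ℝ → ℝ) (ρ : ℝ → ℝ) (s : ℝ) : ℝ :=
  -(2 * (n : ℝ)) * (Fint f s / f s) * (ρ s ^ (n - 1) / deriv ρ s) -
    ρ s ^ n / (deriv ρ s) ^ 2 - 2 * ρ s ^ n * Fint f s

/-- The functional `W(s) = r(s) √((u'(r(s)))² + 2 F(s))`. -/
def Wfun (f v ρ : ℝ → ℝ) (s : ℝ) : ℝ :=
  ρ s * Real.sqrt ((deriv v (ρ s)) ^ 2 + 2 * Fint f s)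

/-- The functional `W̃(s) = r(s)^{n-1} √((u'(r(s)))² + 2 F(s))`. -/
def Wtil (n : ℕ) (f : ℝ → ℝ) (v ρ : ℝ → ℝ) (s : ℝ) : ℝ :=
  ρ s ^ (n - 1) * Real.sqrt ((deriv v (ρ s)) ^ 2 + 2 * Fint f s)

/-- `v` changes sign at `z ∈ (0,∞)`: `v z = 0` and `v` takes both signs in every
neighborhood of `z` (within `(0,∞)`). -/
def SignChange (v : ℝ → ℝ) (z : ℝ) : Prop :=
  v z = 0 ∧ ∀ ε : ℝ, 0 < ε →
    (∃ x ∈ Ioo (z - ε) (z + ε) ∩ Ioi 0, 0 < v x) ∧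
    (∃ x ∈ Ioo (z - ε) (z + ε) ∩ Ioi 0, v x < 0)

/-- `v` has exactly `m` sign changes in `(0,∞)`. -/
def ExactSignChanges (v : ℝ → ℝ) (m : ℕ) : Prop :=
  {z | 0 < z ∧ SignChange v z}.Finite ∧ {z | 0 < z ∧ SignChange v z}.ncard = m

/-- Bound state: a C² solution of (E) on `(0,∞)` with `v' 0 = 0` and `v r → 0` as `r → ∞`. -/
def BoundState (n : ℕ) (f : ℝ → ℝ) (v : ℝ → ℝ) : Prop :=
  ContinuousOn v (Ici 0) ∧
    (∀ r : ℝ, 0 < r → DifferentiableAt ℝ v r ∧ DifferentiableAt ℝ (deriv v) r) ∧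
    (∀ r : ℝ, 0 < r → deriv (deriv v) r + ((n : ℝ) - 1) / r * deriv v r + f (v r) = 0) ∧
    deriv v 0 = 0 ∧ Tendsto v atTop (nhds 0)

/-- Solution of the Dirichlet problem on the ball of radius `R`. -/
def DirichletSol (n : ℕ) (f : ℝ → ℝ) (R : ℝ) (v : ℝ → ℝ) : Prop :=
  ContinuousOn v (Icc 0 R) ∧
    (∀ r ∈ Ioo (0:ℝ) R, DifferentiableAt ℝ v r ∧ DifferentiableAt ℝ (deriv v) r) ∧
    (∀ r ∈ Ioo (0:ℝ) R, deriv (deriv v) r + ((n : ℝ) - 1) / r * deriv v r + f (v r) = 0) ∧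
    deriv v 0 = 0 ∧ v R = 0

end
end Paper

open Paper Set Filter MeasureTheory

/-!
Along a decreasing branch use the value `s` of the solution as the independent variable, and put
`q = |u'|`, `S = √(q² + 2F)` and `x = q / S`. Equation (E) gives `r' = -1/q` and, for `W = r S`,
`W' = (n - 1) x - 1/x`. Where `F ≤ 0`, the inequality `S₁ < S₂` forces `q₁ < q₂` and `x₂ ≤ x₁`, so
`r₁ - r₂` is decreasing and `W₁ - W₂` nondecreasing: going down from `U`, both `r₁ ≥ r₂` and
`W₁ < W₂` are preserved. Conversely these two inequalities give back `S₁ < S₂`, so by continuity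
`S₁ < S₂` can never fail below `U`.
-/

lemma forall_mem_Icc_lt_of_forall_Ioc_lt {X Y : Type*} [ConditionallyCompleteLinearOrder X]
    [TopologicalSpace X] [OrderTopology X] [LinearOrder Y] [TopologicalSpace Y]
    [OrderClosedTopology Y] {c d : X} {g h : X → Y} (hg : ContinuousOn g (Icc c d))
    (hh : ContinuousOn h (Icc c d))
    (step : ∀ s ∈ Icc c d, (∀ t ∈ Ioc s d, g t < h t) → g s < h s) :
    ∀ s ∈ Icc c d, g s < h s := by
  by_contra! hfail
  have hcompact : IsCompact {s ∈ Icc c d | h s ≤ g s} :=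
    isCompact_Icc.of_isClosed_subset (isClosed_Icc.isClosed_le hh hg) (sep_subset _ _)
  obtain ⟨s, ⟨hs, hle⟩, hmax⟩ := hcompact.exists_isGreatest hfail
  refine (step s hs fun t ht => ?_).not_ge hle
  by_contra! hge
  exact ht.1.not_ge (hmax ⟨⟨hs.1.trans ht.1.le, ht.2⟩, hge⟩)

lemma div_sqrt_sq_add_le {x p q : ℝ} (hx : x ≤ 0) (hp : 0 < p) (hpx : 0 < p ^ 2 + x)
    (hpq : p ≤ q) : q / √(q ^ 2 + x) ≤ p / √(p ^ 2 + x) := by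
  have hsq : p ^ 2 ≤ q ^ 2 := by gcongr
  have hqx : 0 < q ^ 2 + x := by linarith
  rw [div_le_div_iff₀ (Real.sqrt_pos.2 hqx) (Real.sqrt_pos.2 hpx)]
  refine le_of_sq_le_sq ?_ (by positivity)
  rw [mul_pow, mul_pow, Real.sq_sqrt hpx.le, Real.sq_sqrt hqx.le]
  linarith [mul_le_mul_of_nonpos_right hsq hx]

namespace Paper

section Potential

variable {f : ℝ → ℝ} {b β : ℝ}

lemma hasDerivAt_Fint (hf : Continuous f) (s : ℝ) : HasDerivAt (Fint f) (f s) s :=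
  (hf.integral_hasStrictDerivAt 0 s).hasDerivAt

lemma continuous_Fint (hf : Continuous f) : Continuous (Fint f) :=
  continuous_iff_continuousAt.2 fun s => (hasDerivAt_Fint hf s).continuousAt

lemma Fint_abs (hodd : ∀ s, f (-s) = -f s) (s : ℝ) : Fint f |s| = Fint f s := by
  rcases abs_choice s with h | h <;> rw [h]
  have hreflect := intervalIntegral.integral_comp_neg (a := 0) (b := -s) f
  simp only [hodd, intervalIntegral.integral_neg, neg_zero, neg_neg] at hreflect
  rw [Fint, Fint, ← neg_neg (∫ t in 0..-s, f t), hreflect, ← intervalIntegral.integral_symm]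

lemma antitoneOn_Fint (hf : Continuous f) {D : Set ℝ} (hD : Convex ℝ D)
    (hneg : ∀ s ∈ interior D, f s ≤ 0) : AntitoneOn (Fint f) D :=
  antitoneOn_of_hasDerivWithinAt_nonpos hD (continuous_Fint hf).continuousOn
    (fun s _ => (hasDerivAt_Fint hf s).hasDerivWithinAt) hneg

lemma monotoneOn_Fint (hf : Continuous f) {D : Set ℝ} (hD : Convex ℝ D)
    (hpos : ∀ s ∈ interior D, 0 ≤ f s) : MonotoneOn (Fint f) D :=
  monotoneOn_of_hasDerivWithinAt_nonneg hD (continuous_Fint hf).continuousOn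
    (fun s _ => (hasDerivAt_Fint hf s).hasDerivWithinAt) hpos

lemma Hf1.pos (h1 : Hf1 f b β) : 0 < b :=
  h1.2.2.1

lemma Hf1.antitoneOn_Fint (h1 : Hf1 f b β) (hf : Continuous f) :
    AntitoneOn (Fint f) (Icc 0 b) :=
  Paper.antitoneOn_Fint hf (convex_Icc 0 b) fun s hs => h1.2.2.2.2.2.1 s (interior_subset hs)

lemma Hf1.monotoneOn_Fint (h1 : Hf1 f b β) (hf : Continuous f) :
    MonotoneOn (Fint f) (Ici b) := by
  refine Paper.monotoneOn_Fint hf (convex_Ici b) fun s hs => ?_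
  rw [interior_Ici] at hs
  exact (h1.2.2.2.2.1 s hs).le

lemma Hf1.Fint_le (h1 : Hf1 f b β) (hf : Continuous f) (s : ℝ) : Fint f b ≤ Fint f s := by
  rw [← Fint_abs h1.1 s]
  rcases le_total |s| b with h | h
  · exact h1.antitoneOn_Fint hf ⟨abs_nonneg s, h⟩ ⟨h1.pos.le, le_rfl⟩ h
  · exact h1.monotoneOn_Fint hf self_mem_Ici h h

lemma Hf1.Fint_nonpos (h1 : Hf1 f b β) (hf : Continuous f) {s : ℝ} (hs : s ∈ Icc (-β) β) :
    Fint f s ≤ 0 := by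
  rw [← Fint_abs h1.1 s]
  have hsβ : |s| ≤ β := abs_le.2 hs
  rcases le_total |s| b with h | h
  · calc Fint f |s| ≤ Fint f 0 :=
          h1.antitoneOn_Fint hf ⟨le_rfl, h1.pos.le⟩ ⟨abs_nonneg s, h⟩ (abs_nonneg s)
      _ = 0 := intervalIntegral.integral_same
  · calc Fint f |s| ≤ Fint f β := h1.monotoneOn_Fint hf h (h.trans hsβ) hsβ
      _ = 0 := h1.2.2.2.2.2.2.2

end Potential

section Energy

variable {n : ℕ} {f v : ℝ → ℝ} {α : ℝ}

/-- The energy `(v')² + 2 F(v)` of `v`, which equation (E) dissipates. -/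
noncomputable def energy (f v : ℝ → ℝ) (r : ℝ) : ℝ := deriv v r ^ 2 + 2 * Fint f (v r)

lemma hasDerivAt_energy (hf : Continuous f) {c r : ℝ} (hv : DifferentiableAt ℝ v r)
    (hv' : DifferentiableAt ℝ (deriv v) r)
    (hode : deriv (deriv v) r + c * deriv v r + f (v r) = 0) :
    HasDerivAt (energy f v) (-(2 * c * deriv v r ^ 2)) r := by
  refine ((hv'.hasDerivAt.pow 2).add
    (((hasDerivAt_Fint hf (v r)).comp r hv.hasDerivAt).const_mul 2)).congr_deriv ?_
  push_cast
  linear_combination (2 * deriv v r) * hode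

lemma IVPsol.hasDerivAt_energy (hv : IVPsol n f α v) (hf : Continuous f) {r : ℝ} (hr : 0 < r) :
    HasDerivAt (energy f v) (-(2 * (((n : ℝ) - 1) / r) * deriv v r ^ 2)) r :=
  let ⟨_, _, _, hdiff, hode⟩ := hv
  Paper.hasDerivAt_energy hf (hdiff r hr).1 (hdiff r hr).2 (hode r hr)

lemma IVPsol.antitoneOn_energy (hv : IVPsol n f α v) (hn : 1 ≤ n) (hf : Continuous f)
    (hv' : ContinuousOn (deriv v) (Ici 0)) : AntitoneOn (energy f v) (Ici 0) := by
  refine antitoneOn_of_hasDerivWithinAt_nonpos (convex_Ici 0)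
    (f' := fun r => -(2 * (((n : ℝ) - 1) / r) * deriv v r ^ 2))
    ((hv'.pow 2).add (((continuous_Fint hf).comp_continuousOn hv.2.2.1).const_smul (2 : ℝ)))
    (fun r hr => ?_) fun r hr => ?_ <;> rw [interior_Ici] at hr
  · exact (hv.hasDerivAt_energy hf hr).hasDerivWithinAt
  · have hdamping : 0 ≤ ((n : ℝ) - 1) / r :=
      div_nonneg (sub_nonneg.2 (by exact_mod_cast hn)) (le_of_lt hr)
    exact neg_nonpos.2 (by positivity)

lemma IVPsol.deriv_eq_zero_of_Fint_le (hv : IVPsol n f α v) (hn : 1 ≤ n) (hf : Continuous f)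
    (hv' : ContinuousOn (deriv v) (Ici 0)) {r : ℝ} (hr : 0 ≤ r)
    (hF : Fint f α ≤ Fint f (v r)) : deriv v r = 0 := by
  have henergy : energy f v r ≤ energy f v 0 :=
    hv.antitoneOn_energy hn hf hv' self_mem_Ici hr hr
  simp only [energy, hv.1, hv.2.1] at henergy
  exact pow_eq_zero_iff two_ne_zero |>.1 (le_antisymm (by linarith) (sq_nonneg _))

end Energy

section InitialValues

variable {n : ℕ} {f : ℝ → ℝ} {u : ℝ → ℝ → ℝ} {k : ℕ} {α : ℝ}

lemma Family.continuousOn_deriv (hu : Family n f u) (hα : 0 < α) :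
    ContinuousOn (deriv (u α)) (Ici 0) :=
  hu.2.2.comp (f := fun r : ℝ => (α, r)) (by fun_prop) fun _ hr => ⟨hα, hr⟩

lemma Tk_nonneg (u : ℝ → ℝ → ℝ) (k : ℕ) (α : ℝ) : 0 ≤ Tk u k α := by
  induction k with
  | zero => exact le_rfl
  | succ k ih =>
    have hZ : 0 ≤ Zk u (k + 1) α := Real.sSup_nonneg fun r hr => ih.trans hr.1.le
    exact Real.sInf_nonneg fun r hr => hZ.trans hr.1.le

-- Here `Z_{k+1} α` takes the junk value `sSup ∅ = 0`.
lemma uAtZ_eq_of_ZsetK_eq_empty (h : ZsetK u (k + 1) α = ∅) : uAtZ u (k + 1) α = u α 0 := by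
  have hZ : Zk u (k + 1) α = 0 := (congrArg sSup h).trans Real.sSup_empty
  rw [uAtZ, h, if_pos bddAbove_empty, hZ]

lemma Family.ZsetK_one_eq_empty (hu : Family n f u) (hn : 1 ≤ n) (hf : Continuous f)
    (hα : 0 < α) (hF : AntitoneOn (Fint f) (Icc 0 α)) : ZsetK u 1 α = ∅ := by
  refine eq_empty_of_forall_notMem fun r ⟨(hr : 0 < r), hmono⟩ => ?_
  have hsol := hu.1 α hα
  have hdecr : ∀ t ∈ Ioo 0 r, deriv (u α) t < 0 := fun t ht => by linarith [(hmono t ht).2]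
  have hanti : StrictAntiOn (u α) (Icc 0 (r / 2)) := by
    refine strictAntiOn_of_deriv_neg (convex_Icc _ _)
      (hsol.2.2.1.mono Icc_subset_Ici_self) fun t ht => ?_
    rw [interior_Icc] at ht
    exact hdecr t ⟨ht.1, by linarith [ht.2]⟩
  have hmid : r / 2 ∈ Ioo 0 r := ⟨by linarith, by linarith⟩
  have hpos : 0 < u α (r / 2) := by linarith [(hmono _ hmid).1]
  have hle : u α (r / 2) ≤ α := by
    have hlt := hanti (left_mem_Icc.2 hmid.1.le) (right_mem_Icc.2 hmid.1.le) hmid.1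
    rw [hsol.1] at hlt
    exact hlt.le
  exact (hdecr _ hmid).ne (hsol.deriv_eq_zero_of_Fint_le hn hf (hu.continuousOn_deriv hα)
    hmid.1.le (hF ⟨hpos.le, hle⟩ ⟨hα.le, le_rfl⟩ hle))

lemma Family.lt_of_uAtZ_one_eq_zero (hu : Family n f u) (hn : 1 ≤ n) (hf : Continuous f)
    {b : ℝ} (hF : AntitoneOn (Fint f) (Icc 0 b)) (hα : 0 < α) (hZ : uAtZ u 1 α = 0) :
    b < α := by
  by_contra! hb
  have hempty := hu.ZsetK_one_eq_empty hn hf hα (hF.mono (Icc_subset_Icc_right hb))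
  rw [uAtZ_eq_of_ZsetK_eq_empty hempty, (hu.1 α hα).1] at hZ
  exact hα.ne' hZ

lemma pos_and_uAtZ_one_of_mem_Nk (h : α ∈ Nk u (k + 1)) : 0 < α ∧ uAtZ u 1 α = 0 := by
  induction k with
  | zero => exact ⟨h.1, h.2.1⟩
  | succ k ih => exact ih h.1

lemma pos_and_uAtZ_one_of_mem_Gk (h : α ∈ Gk u k) : 0 < α ∧ uAtZ u 1 α = 0 :=
  match k, h with
  | 1, h => ⟨h.1, h.2.1⟩
  | _ + 2, h => pos_and_uAtZ_one_of_mem_Nk h.1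

variable {αs a δ₁ β c : ℝ}

-- The solution starting at a minimum of `F` is constant, so each of its points is extremal.
lemma DeltaOneLemma.notMem_of_Fint_le (hδ₁ : DeltaOneLemma f β u k αs a δ₁)
    (hu : Family n f u) (hn : 1 ≤ n) (hf : Continuous f) (hc : 0 < c)
    (hmin : ∀ s, Fint f c ≤ Fint f s) : c ∉ Ioo (αs - δ₁) (αs + δ₁) := by
  intro hmem
  have hall : Icc 0 (Tk u (k - 1) αs + a) ⊆ ExtSet u c (Tk u (k - 1) αs + a) := fun r hr =>
    ⟨hr, (hu.1 c hc).deriv_eq_zero_of_Fint_le hn hf (hu.continuousOn_deriv hc) hr.1 (hmin _)⟩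
  have hlength : 0 < Tk u (k - 1) αs + a := add_pos_of_nonneg_of_pos (Tk_nonneg u _ αs) hδ₁.1
  exact Icc_infinite hlength ((hδ₁.2.2.1 c hmem).1.subset hall)

lemma DeltaOneLemma.pos_of_mem (hδ₁ : DeltaOneLemma f β u k αs a δ₁) (hu : Family n f u)
    (hn : 1 ≤ n) (hf : Continuous f) {b : ℝ} (h1 : Hf1 f b β) (hαs : αs ∈ Gk u k)
    (hα : α ∈ Ioo (αs - δ₁) (αs + δ₁)) : 0 < α := by
  obtain ⟨hpos, hZ⟩ := pos_and_uAtZ_one_of_mem_Gk hαs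
  have hb : 0 < b := h1.pos
  have hbα : b < αs := hu.lt_of_uAtZ_one_eq_zero hn hf (h1.antitoneOn_Fint hf) hpos hZ
  have hnot := hδ₁.notMem_of_Fint_le hu hn hf hb (h1.Fint_le hf)
  by_contra! hle
  exact hnot ⟨by linarith [hα.1], by linarith [hδ₁.2.1]⟩

end InitialValues

section Branch

variable {n : ℕ} {f v ρ : ℝ → ℝ} {α m M s : ℝ}

/-- The factor `S(s) = √((u'(r(s)))² + 2 F(s))` of `W`, along the branch inverse `ρ`. -/
noncomputable def rootEnergy (f v ρ : ℝ → ℝ) (s : ℝ) : ℝ := √(deriv v (ρ s) ^ 2 + 2 * Fint f s)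

/-- The ratio `|u'| / √((u')² + 2F)` at the value `s` of a decreasing branch with inverse `ρ`,
through which the derivative of `W` is expressed. -/
noncomputable def slopeRatio (f v ρ : ℝ → ℝ) (s : ℝ) : ℝ := -deriv v (ρ s) / rootEnergy f v ρ s

lemma DecBranchInv.mono (hρ : DecBranchInv f v ρ m M) {m' M' : ℝ} (hm : m ≤ m') (hM : M' ≤ M) :
    DecBranchInv f v ρ m' M' :=
  fun s hs => hρ s (Icc_subset_Icc hm hM hs)

lemma DecBranchInv.deriv_neg (hρ : DecBranchInv f v ρ m M) (hs : s ∈ Icc m M) :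
    deriv v (ρ s) < 0 :=
  (hρ s hs).2.2.1

lemma DecBranchInv.hasDerivAt (hρ : DecBranchInv f v ρ m M) (hs : s ∈ Icc m M) :
    HasDerivAt ρ (1 / deriv v (ρ s)) s :=
  (hρ s hs).2.2.2.1

lemma DecBranchInv.energy_pos (hρ : DecBranchInv f v ρ m M) (hs : s ∈ Icc m M) :
    0 < deriv v (ρ s) ^ 2 + 2 * Fint f s :=
  (hρ s hs).2.2.2.2

lemma DecBranchInv.pos (hρ : DecBranchInv f v ρ m M) (hv : IVPsol n f α v) (hs : s ∈ Icc m M) :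
    0 < ρ s := by
  have hneg := hρ.deriv_neg hs
  refine (hρ s hs).1.lt_of_ne fun h => ?_
  rw [← h, hv.2.1] at hneg
  exact hneg.false

lemma DecBranchInv.rootEnergy_pos (hρ : DecBranchInv f v ρ m M) (hs : s ∈ Icc m M) :
    0 < rootEnergy f v ρ s :=
  Real.sqrt_pos.2 (hρ.energy_pos hs)

lemma DecBranchInv.slopeRatio_pos (hρ : DecBranchInv f v ρ m M) (hs : s ∈ Icc m M) :
    0 < slopeRatio f v ρ s :=
  div_pos (neg_pos.2 (hρ.deriv_neg hs)) (hρ.rootEnergy_pos hs)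

lemma DecBranchInv.hasDerivWithinAt_rootEnergy (hρ : DecBranchInv f v ρ m M)
    (hv : IVPsol n f α v) (hf : Continuous f) (hs : s ∈ Icc m M) :
    HasDerivWithinAt (rootEnergy f v ρ) (((n : ℝ) - 1) * slopeRatio f v ρ s / ρ s)
      (Icc m M) s := by
  have hr := hρ.pos hv hs
  have hS := hρ.rootEnergy_pos hs
  have henergy : ∀ t ∈ Icc m M, rootEnergy f v ρ t = √(energy f v (ρ t)) := fun t ht => by
    rw [rootEnergy, energy, (hρ t ht).2.1]
  have hne : energy f v (ρ s) ≠ 0 := (Real.sqrt_pos.1 (henergy s hs ▸ hS)).ne'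
  have hroot := ((hv.hasDerivAt_energy hf hr).sqrt hne).comp_hasDerivWithinAt s
    ((hρ.hasDerivAt hs).hasDerivWithinAt (s := Icc m M))
  refine (hroot.congr henergy (henergy s hs)).congr_deriv ?_
  rw [← henergy s hs, slopeRatio]
  have hslope := (hρ.deriv_neg hs).ne
  field_simp

lemma DecBranchInv.hasDerivWithinAt_Wfun (hρ : DecBranchInv f v ρ m M)
    (hv : IVPsol n f α v) (hf : Continuous f) (hs : s ∈ Icc m M) :
    HasDerivWithinAt (Wfun f v ρ)
      (((n : ℝ) - 1) * slopeRatio f v ρ s - (slopeRatio f v ρ s)⁻¹) (Icc m M) s := by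
  refine ((hρ.hasDerivAt hs).hasDerivWithinAt.mul
    (hρ.hasDerivWithinAt_rootEnergy hv hf hs)).congr_deriv ?_
  have hr := (hρ.pos hv hs).ne'
  have hS := (hρ.rootEnergy_pos hs).ne'
  have hslope := (hρ.deriv_neg hs).ne
  rw [slopeRatio]
  field_simp
  ring

end Branch

section TwoBranches

variable {n : ℕ} {f v₁ v₂ ρ₁ ρ₂ : ℝ → ℝ} {α₁ α₂ m U s : ℝ}

lemma DecBranchInv.deriv_lt_of_rootEnergy_lt (hρ₁ : DecBranchInv f v₁ ρ₁ m U)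
    (hρ₂ : DecBranchInv f v₂ ρ₂ m U) (hs : s ∈ Icc m U)
    (hlt : rootEnergy f v₁ ρ₁ s < rootEnergy f v₂ ρ₂ s) :
    deriv v₂ (ρ₂ s) < deriv v₁ (ρ₁ s) := by
  have hneg₁ := hρ₁.deriv_neg hs
  have hneg₂ := hρ₂.deriv_neg hs
  have hsq : deriv v₁ (ρ₁ s) ^ 2 < deriv v₂ (ρ₂ s) ^ 2 := by
    have := (Real.sqrt_lt_sqrt_iff (hρ₁.energy_pos hs).le).1 hlt
    linarith
  have habs := sq_lt_sq.1 hsq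
  rw [abs_of_neg hneg₁, abs_of_neg hneg₂] at habs
  exact neg_lt_neg_iff.1 habs

lemma DecBranchInv.slopeRatio_le_of_rootEnergy_lt (hρ₁ : DecBranchInv f v₁ ρ₁ m U)
    (hρ₂ : DecBranchInv f v₂ ρ₂ m U) (hs : s ∈ Icc m U) (hF : Fint f s ≤ 0)
    (hlt : rootEnergy f v₁ ρ₁ s < rootEnergy f v₂ ρ₂ s) :
    slopeRatio f v₂ ρ₂ s ≤ slopeRatio f v₁ ρ₁ s := by
  have hslope := hρ₁.deriv_lt_of_rootEnergy_lt hρ₂ hs hlt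
  have := div_sqrt_sq_add_le (x := 2 * Fint f s) (by linarith)
    (neg_pos.2 (hρ₁.deriv_neg hs)) (by simpa only [neg_sq] using hρ₁.energy_pos hs)
    (neg_le_neg hslope.le)
  rwa [neg_sq, neg_sq] at this

lemma DecBranchInv.strictAntiOn_sub (hρ₁ : DecBranchInv f v₁ ρ₁ m U)
    (hρ₂ : DecBranchInv f v₂ ρ₂ m U)
    (hlt : ∀ s ∈ Ioo m U, rootEnergy f v₁ ρ₁ s < rootEnergy f v₂ ρ₂ s) :
    StrictAntiOn (ρ₁ - ρ₂) (Icc m U) := by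
  have hderiv : ∀ s ∈ Icc m U,
      HasDerivAt (ρ₁ - ρ₂) (1 / deriv v₁ (ρ₁ s) - 1 / deriv v₂ (ρ₂ s)) s := fun s hs =>
    (hρ₁.hasDerivAt hs).sub (hρ₂.hasDerivAt hs)
  refine strictAntiOn_of_hasDerivWithinAt_neg (convex_Icc m U)
    (fun s hs => (hderiv s hs).continuousAt.continuousWithinAt)
    (fun s hs => (hderiv s (interior_subset hs)).hasDerivWithinAt) fun s hs => ?_
  have hs' := interior_subset hs
  rw [interior_Icc] at hs
  exact sub_neg.2 (one_div_lt_one_div_of_neg_of_lt (hρ₁.deriv_neg hs')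
    (hρ₁.deriv_lt_of_rootEnergy_lt hρ₂ hs' (hlt s hs)))

lemma DecBranchInv.monotoneOn_Wfun_sub (hρ₁ : DecBranchInv f v₁ ρ₁ m U)
    (hρ₂ : DecBranchInv f v₂ ρ₂ m U) (hv₁ : IVPsol n f α₁ v₁) (hv₂ : IVPsol n f α₂ v₂)
    (hn : 1 ≤ n) (hf : Continuous f) (hF : ∀ s ∈ Icc m U, Fint f s ≤ 0)
    (hlt : ∀ s ∈ Ioo m U, rootEnergy f v₁ ρ₁ s < rootEnergy f v₂ ρ₂ s) :
    MonotoneOn (Wfun f v₁ ρ₁ - Wfun f v₂ ρ₂) (Icc m U) := by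
  have hderiv := fun s hs =>
    (hρ₁.hasDerivWithinAt_Wfun (s := s) hv₁ hf hs).sub (hρ₂.hasDerivWithinAt_Wfun hv₂ hf hs)
  refine monotoneOn_of_hasDerivWithinAt_nonneg (convex_Icc m U)
    (fun s hs => (hderiv s hs).continuousWithinAt)
    (fun s hs => (hderiv s (interior_subset hs)).mono interior_subset) fun s hs => ?_
  have hs' := interior_subset hs
  rw [interior_Icc] at hs
  have hratio := hρ₁.slopeRatio_le_of_rootEnergy_lt hρ₂ hs' (hF s hs') (hlt s hs)
  have hn' : (0 : ℝ) ≤ n - 1 := sub_nonneg.2 (by exact_mod_cast hn)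
  have hinv := inv_anti₀ (hρ₂.slopeRatio_pos hs') hratio
  exact sub_nonneg.2 (sub_le_sub (mul_le_mul_of_nonneg_left hratio hn') hinv)

lemma DecBranchInv.rootEnergy_lt_of_Wfun_lt (hρ₁ : DecBranchInv f v₁ ρ₁ m U)
    (hs : s ∈ Icc m U) (hr : ρ₂ s ≤ ρ₁ s) (hW : Wfun f v₁ ρ₁ s < Wfun f v₂ ρ₂ s) :
    rootEnergy f v₁ ρ₁ s < rootEnergy f v₂ ρ₂ s :=
  lt_of_mul_lt_mul_left (hW.trans_le (mul_le_mul_of_nonneg_right hr (Real.sqrt_nonneg _)))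
    (hρ₁ s hs).1

lemma DecBranchInv.separation_of_rootEnergy_lt (hρ₁ : DecBranchInv f v₁ ρ₁ m U)
    (hρ₂ : DecBranchInv f v₂ ρ₂ m U) (hv₁ : IVPsol n f α₁ v₁) (hv₂ : IVPsol n f α₂ v₂)
    (hn : 1 ≤ n) (hf : Continuous f) (hF : ∀ s ∈ Icc m U, Fint f s ≤ 0)
    (hrU : ρ₂ U ≤ ρ₁ U) (hWU : Wfun f v₁ ρ₁ U < Wfun f v₂ ρ₂ U)
    (hlt : ∀ s ∈ Ioo m U, rootEnergy f v₁ ρ₁ s < rootEnergy f v₂ ρ₂ s) (hs : s ∈ Ico m U) :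
    ρ₂ s < ρ₁ s ∧ Wfun f v₁ ρ₁ s < Wfun f v₂ ρ₂ s := by
  have hU : U ∈ Icc m U := right_mem_Icc.2 (hs.1.trans hs.2.le)
  have hr : ρ₁ U - ρ₂ U < ρ₁ s - ρ₂ s :=
    hρ₁.strictAntiOn_sub hρ₂ hlt (Ico_subset_Icc_self hs) hU hs.2
  have hW : Wfun f v₁ ρ₁ s - Wfun f v₂ ρ₂ s ≤ Wfun f v₁ ρ₁ U - Wfun f v₂ ρ₂ U :=
    hρ₁.monotoneOn_Wfun_sub hρ₂ hv₁ hv₂ hn hf hF hlt (Ico_subset_Icc_self hs) hU hs.2.le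
  exact ⟨by linarith, by linarith⟩

lemma DecBranchInv.rootEnergy_lt (hρ₁ : DecBranchInv f v₁ ρ₁ m U)
    (hρ₂ : DecBranchInv f v₂ ρ₂ m U) (hv₁ : IVPsol n f α₁ v₁) (hv₂ : IVPsol n f α₂ v₂)
    (hn : 1 ≤ n) (hf : Continuous f) (hF : ∀ s ∈ Icc m U, Fint f s ≤ 0)
    (hrU : ρ₂ U ≤ ρ₁ U) (hWU : Wfun f v₁ ρ₁ U < Wfun f v₂ ρ₂ U) :
    ∀ s ∈ Icc m U, rootEnergy f v₁ ρ₁ s < rootEnergy f v₂ ρ₂ s := by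
  refine forall_mem_Icc_lt_of_forall_Ioc_lt
    (fun s hs => (hρ₁.hasDerivWithinAt_rootEnergy hv₁ hf hs).continuousWithinAt)
    (fun s hs => (hρ₂.hasDerivWithinAt_rootEnergy hv₂ hf hs).continuousWithinAt)
    fun s hs hlt => ?_
  rcases hs.2.eq_or_lt with rfl | hsU
  · exact hρ₁.rootEnergy_lt_of_Wfun_lt hs hrU hWU
  obtain ⟨hr, hW⟩ := (hρ₁.mono hs.1 le_rfl).separation_of_rootEnergy_lt (hρ₂.mono hs.1 le_rfl)
    hv₁ hv₂ hn hf (fun t ht => hF t ⟨hs.1.trans ht.1, ht.2⟩) hrU hWU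
    (fun t ht => hlt t (Ioo_subset_Ioc_self ht)) (left_mem_Ico.2 hsU)
  exact hρ₁.rootEnergy_lt_of_Wfun_lt hs hr.le hW

end TwoBranches

end Paper

theorem W_separation_general {n : ℕ} (hn : 1 ≤ n) {f : ℝ → ℝ} (hf : Continuous f) {m U : ℝ}
    (hF : ∀ s ∈ Icc m U, Fint f s ≤ 0) {α₁ α₂ : ℝ} {v₁ v₂ : ℝ → ℝ}
    (hv₁ : IVPsol n f α₁ v₁) (hv₂ : IVPsol n f α₂ v₂) {ρ₁ ρ₂ : ℝ → ℝ}
    (hρ₁ : DecBranchInv f v₁ ρ₁ m U) (hρ₂ : DecBranchInv f v₂ ρ₂ m U)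
    (hrU : ρ₂ U ≤ ρ₁ U) (hWU : Wfun f v₁ ρ₁ U < Wfun f v₂ ρ₂ U) :
    ∀ s ∈ Ico m U, ρ₂ s < ρ₁ s ∧ Wfun f v₁ ρ₁ s < Wfun f v₂ ρ₂ s := by
  have hlt := hρ₁.rootEnergy_lt hρ₂ hv₁ hv₂ hn hf hF hrU hWU
  exact fun s hs => hρ₁.separation_of_rootEnergy_lt hρ₂ hv₁ hv₂ hn hf hF hrU hWU
    (fun t ht => hlt t (Ioo_subset_Icc_self ht)) hs

/-- **Lemma 4.3.** Under (f1), (f2): separation lemma for the functional `W` on a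
decreasing branch covering `[-β, β]`. -/
theorem W_separation
    (n : ℕ) (hn : 2 ≤ n)
    (f : ℝ → ℝ) (b β : ℝ) (hf : Continuous f)
    (h1 : Hf1 f b β) (h2 : Hf2 f)
    (u : ℝ → ℝ → ℝ) (hu : Family n f u)
    (k : ℕ) (hk : 1 ≤ k) (αs : ℝ) (hαs : αs ∈ Gk u k)
    (a δ₁ : ℝ) (hδ₁ : DeltaOneLemma f β u k αs a δ₁)
    (α₁ : ℝ) (hα₁ : α₁ ∈ Ioo (αs - δ₁) (αs + δ₁))
    (α₂ : ℝ) (hα₂ : α₂ ∈ Ioo (αs - δ₁) (αs + δ₁)) (h12 : α₁ < α₂)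
    (ρ₁ ρ₂ : ℝ → ℝ)
    (hρ₁ : DecBranchInv f (u α₁) ρ₁ (-β) β)
    (hρ₂ : DecBranchInv f (u α₂) ρ₂ (-β) β)
    (U : ℝ) (hU : U ∈ Icc (-β) β)
    (hrU : ρ₂ U ≤ ρ₁ U)
    (hWU : Wfun f (u α₁) ρ₁ U < Wfun f (u α₂) ρ₂ U) :
    ∀ s ∈ Ico (-β) U, ρ₂ s < ρ₁ s ∧ Wfun f (u α₁) ρ₁ s < Wfun f (u α₂) ρ₂ s := by
  have hpos {α : ℝ} : α ∈ Ioo (αs - δ₁) (αs + δ₁) → 0 < α :=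
    hδ₁.pos_of_mem hu (by lia) hf h1 hαs
  exact W_separation_general (by lia) hf
    (fun s hs => h1.Fint_nonpos hf ⟨hs.1, hs.2.trans hU.2⟩) (hu.1 α₁ (hpos hα₁))
    (hu.1 α₂ (hpos hα₂)) (hρ₁.mono le_rfl hU.2) (hρ₂.mono le_rfl hU.2) hrU hWU
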